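/- Higher-dimensional sufficient condition for NTK blow-up (one hidden layer, n > 1). Let a : ℝ^n → ℝ^{n×n} have C¹, bounded entries with bounded first partial derivatives, let σ : ℝ → ℝ be C² with σ'(y) > 0 for all y, and let u(x;θ) = Σ_{k=1}^d W¹_k σ(Σ_{l=1}^n W⁰_{kl} x_l + b⁰_k) + b¹ be a one-hidden-layer network on ℝ^n, with g_μ(x;θ) = σ(Σ_l W⁰_{μl} x_l + b⁰_μ). Define Lε φ(x) = −Σ_{i,j=1}^n [ (1/ε)(∂_{x_i} a_{ij})(x/ε) ∂_{x_j}φ(x) + a_{ij}(x/ε) ∂²_{x_i x_j}φ(x) ]. Fix a collocation point x ∈ ℝ^n and C > 0, let (ε_n) be positive reals with ε_n → 0, and let θ^{ε_n} be parameters with ‖θ^{ε_n}‖_∞ ≤ C. Suppose that for some index 1 ≤ μ ≤ d, (1/ε_n) |Σ_{i,j=1}^n (∂_{x_i} a_{ij})(x/ε_n) W^{(0),ε_n}_{μj}| → +∞ as n → ∞. Then (L^{ε_n} g_μ(x; θ^{ε_n}))² → +∞; consequently the diagonal NTK entry (1/N_c) Σ_{l=1}^{N_p} (∂_{θ_l}(L^{ε_n}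 u)(x;θ^{ε_n}))² at this collocation point, and hence the Frobenius norm of the NTK matrix, tends to +∞ along the sequence (ε_n). -/

import Mathlib

open Filter Set Topology

noncomputable section

/-- Partial derivative of `F : (I → ℝ) → ℝ` with respect to coordinate `i` at `θ`. -/
def pder {I : Type*} [DecidableEq I] (F : (I → ℝ) → ℝ) (θ : I → ℝ) (i : I) : ℝ :=
  deriv (fun s => F (Function.update θ i s)) (θ i)

/-- Partial derivative `∂_{x_i} φ(x)` of a function of `n` real variables. -/
def pdx {n : ℕ} (φ : (Fin n → ℝ) → ℝ) (x : Fin n → ℝ) (i : Fin n) : ℝ :=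
  deriv (fun s => φ (Function.update x i s)) (x i)

/-- The `n`-dimensional multiscale elliptic operator
`Lε φ(x) = -Σ_{i,j} [ (1/ε)(∂_{x_i} a_{ij})(x/ε) ∂_{x_j}φ(x) + a_{ij}(x/ε) ∂²_{x_i x_j}φ(x) ]`. -/
def LepsN {n : ℕ} (a : Fin n → Fin n → (Fin n → ℝ) → ℝ) (ε : ℝ)
    (φ : (Fin n → ℝ) → ℝ) (x : Fin n → ℝ) : ℝ :=
  -(∑ i, ∑ j,
      ((1 / ε) * pdx (a i j) (fun k => x k / ε) i * pdx φ x j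
        + a i j (fun k => x k / ε) * pdx (fun y => pdx φ y j) x i))

/-- Parameter index type for a one-hidden-layer network on `ℝ^n` of width `d`:
hidden weights `W⁰ ∈ ℝ^{d×n}`, hidden biases `b⁰ ∈ ℝ^d`, outer weights `W¹ ∈ ℝ^d`,
outer bias `b¹ ∈ ℝ`. -/
abbrev PIdx (d n : ℕ) := (Fin d × Fin n) ⊕ (Fin d ⊕ (Fin d ⊕ Unit))

/-- One-hidden-layer network on `ℝ^n`:
`u(x;θ) = Σ_k W¹_k σ(Σ_l W⁰_{kl} x_l + b⁰_k) + b¹`. -/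
def netN (σ : ℝ → ℝ) (d n : ℕ) (x : Fin n → ℝ) (θ : PIdx d n → ℝ) : ℝ :=
  (∑ k : Fin d, θ (Sum.inr (Sum.inr (Sum.inl k))) *
      σ ((∑ l, θ (Sum.inl (k, l)) * x l) + θ (Sum.inr (Sum.inl k))))
    + θ (Sum.inr (Sum.inr (Sum.inr ())))

/-- The neural tangent kernel matrix for the `n`-dimensional problem. -/
def ntkN {I : Type*} [Fintype I] [DecidableEq I] {n : ℕ}
    (a : Fin n → Fin n → (Fin n → ℝ) → ℝ) (ε : ℝ)
    (u : (Fin n → ℝ) → (I → ℝ) → ℝ) (lam : ℝ) {Nc Nb : ℕ}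
    (xs : Fin Nc → Fin n → ℝ) (ss : Fin Nb → Fin n → ℝ) (θ : I → ℝ) :
    Fin Nc ⊕ Fin Nb → Fin Nc ⊕ Fin Nb → ℝ
  | Sum.inl i, Sum.inl j => (1 / (Nc : ℝ)) *
      ∑ l, pder (fun θ' => LepsN a ε (fun x => u x θ') (xs i)) θ l *
        pder (fun θ' => LepsN a ε (fun x => u x θ') (xs j)) θ l
  | Sum.inl i, Sum.inr j => (lam / (Nb : ℝ)) *
      ∑ l, pder (fun θ' => LepsN a ε (fun x => u x θ') (xs i)) θ l *
        pder (fun θ' => u (ss j) θ') θ l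
  | Sum.inr i, Sum.inl j => (1 / (Nc : ℝ)) *
      ∑ l, pder (fun θ' => u (ss i) θ') θ l *
        pder (fun θ' => LepsN a ε (fun x => u x θ') (xs j)) θ l
  | Sum.inr i, Sum.inr j => (lam / (Nb : ℝ)) *
      ∑ l, pder (fun θ' => u (ss i) θ') θ l * pder (fun θ' => u (ss j) θ') θ l

/-- Frobenius norm of a square matrix. -/
def frob {α : Type*} [Fintype α] (K : α → α → ℝ) : ℝ :=
  Real.sqrt (∑ i, ∑ j, (K i j) ^ 2)

lemma aux_hasDerivAt_ridge {n : ℕ} (f : ℝ → ℝ) (hf : Differentiable ℝ f) (w : Fin n → ℝ) (b : ℝ)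
    (y : Fin n → ℝ) (j : Fin n) :
    HasDerivAt (fun s => f ((∑ l, w l * Function.update y j s l) + b))
      (deriv f ((∑ l, w l * y l) + b) * w j) (y j) := by
  have h1 : HasDerivAt (fun s => (∑ l, w l * Function.update y j s l) + b) (w j) (y j) := by
    have h2 : ∀ l ∈ (Finset.univ : Finset (Fin n)),
        HasDerivAt (fun s => w l * Function.update y j s l) (if l = j then w j else 0) (y j) := by
      intro l _
      by_cases h : l = j
      · subst h
        simpa using (hasDerivAt_id (y l)).const_mul (w l)
      · simpa [h] using hasDerivAt_const (y j) (w l * y l)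
    have h3 := (HasDerivAt.fun_sum h2).add_const b
    simpa using h3
  have h4 : HasDerivAt f (deriv f ((∑ l, w l * y l) + b))
      ((∑ l, w l * Function.update y j (y j) l) + b) := by
    rw [Function.update_eq_self]
    exact (hf _).hasDerivAt
  exact HasDerivAt.comp (y j) h4 h1

lemma aux_pdx_ridge_sum {n d : ℕ} (f : ℝ → ℝ) (hf : Differentiable ℝ f) (c : Fin d → ℝ)
    (w : Fin d → Fin n → ℝ) (b : Fin d → ℝ) (e : ℝ) (y : Fin n → ℝ) (j : Fin n) :
    pdx (fun y => (∑ k, c k * f ((∑ l, w k l * y l) + b k)) + e) y j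
      = ∑ k, c k * (deriv f ((∑ l, w k l * y l) + b k) * w k j) := by
  unfold pdx
  exact ((HasDerivAt.fun_sum (fun k _ =>
    (aux_hasDerivAt_ridge f hf (w k) (b k) y j).const_mul (c k))).add_const e).deriv

lemma aux_pdx_ridge {n : ℕ} (f : ℝ → ℝ) (hf : Differentiable ℝ f)
    (w : Fin n → ℝ) (b : ℝ) (y : Fin n → ℝ) (j : Fin n) :
    pdx (fun y => f ((∑ l, w l * y l) + b)) y j
      = deriv f ((∑ l, w l * y l) + b) * w j :=
  (aux_hasDerivAt_ridge f hf w b y j).deriv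

lemma aux_LepsN_ridge {n : ℕ} (a : Fin n → Fin n → (Fin n → ℝ) → ℝ) (ε : ℝ)
    (σ : ℝ → ℝ) (h1 : Differentiable ℝ σ) (h2 : Differentiable ℝ (deriv σ))
    (w : Fin n → ℝ) (b : ℝ) (x : Fin n → ℝ) :
    LepsN a ε (fun y => σ ((∑ l, w l * y l) + b)) x
      = -(∑ i, ∑ j,
      ((1 / ε) * pdx (a i j) (fun k => x k / ε) i * (deriv σ ((∑ l, w l * x l) + b) * w j)
        + a i j (fun k => x k / ε) * (deriv (deriv σ) ((∑ l, w l * x l) + b) * w i * w j))) := by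
  unfold LepsN
  congr 1
  refine Finset.sum_congr rfl fun i _ => Finset.sum_congr rfl fun j _ => ?_
  have e : (fun y => pdx (fun y => σ ((∑ l, w l * y l) + b)) y j)
      = fun y => deriv σ ((∑ l, w l * y l) + b) * w j := by
    funext y; exact aux_pdx_ridge σ h1 w b y j
  rw [e, aux_pdx_ridge σ h1]
  congr 2
  exact ((aux_hasDerivAt_ridge (deriv σ) h2 w b x i).mul_const (w j)).deriv

lemma aux_LepsN_net {n d : ℕ} (a : Fin n → Fin n → (Fin n → ℝ) → ℝ) (ε : ℝ)
    (σ : ℝ → ℝ) (h1 : Differentiable ℝ σ) (h2 : Differentiable ℝ (deriv σ))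
    (θ : PIdx d n → ℝ) (x : Fin n → ℝ) :
    LepsN a ε (fun y => netN σ d n y θ) x
      = ∑ k, θ (Sum.inr (Sum.inr (Sum.inl k))) *
        LepsN a ε (fun y => σ ((∑ l, θ (Sum.inl (k, l)) * y l) + θ (Sum.inr (Sum.inl k)))) x := by
  have e0 : ∀ k, LepsN a ε
      (fun y => σ ((∑ l, θ (Sum.inl (k, l)) * y l) + θ (Sum.inr (Sum.inl k)))) x = _ := fun k =>
    aux_LepsN_ridge a ε σ h1 h2 (fun l => θ (Sum.inl (k, l))) (θ (Sum.inr (Sum.inl k))) x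
  simp_rw [e0]
  have e1 : ∀ j y, pdx (fun y => netN σ d n y θ) y j = _ := fun j y =>
    aux_pdx_ridge_sum σ h1 (fun k => θ (Sum.inr (Sum.inr (Sum.inl k))))
      (fun k l => θ (Sum.inl (k, l))) (fun k => θ (Sum.inr (Sum.inl k))) 
      (θ (Sum.inr (Sum.inr (Sum.inr ())))) y j
  have e2 : ∀ i j, pdx (fun y => pdx (fun y => netN σ d n y θ) y j) x i
      = ∑ k, θ (Sum.inr (Sum.inr (Sum.inl k))) *
        (deriv (deriv σ) ((∑ l, θ (Sum.inl (k, l)) * x l) + θ (Sum.inr (Sum.inl k)))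
          * θ (Sum.inl (k, i)) * θ (Sum.inl (k, j))) := by
    intro i j
    simp_rw [e1]
    exact (HasDerivAt.fun_sum (fun k _ =>
      ((aux_hasDerivAt_ridge (deriv σ) h2 (fun l => θ (Sum.inl (k, l))) (θ (Sum.inr (Sum.inl k)))
        x i).mul_const (θ (Sum.inl (k, j)))).const_mul
          (θ (Sum.inr (Sum.inr (Sum.inl k)))))).deriv
  unfold LepsN
  simp_rw [e2, e1]
  simp_rw [mul_neg, Finset.sum_neg_distrib, Finset.mul_sum, ← Finset.sum_add_distrib]
  congr 1
  conv_rhs => rw [Finset.sum_comm]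
  refine Finset.sum_congr rfl fun i _ => ?_
  conv_rhs => rw [Finset.sum_comm]
  refine Finset.sum_congr rfl fun j _ => Finset.sum_congr rfl fun k _ => ?_
  ring

lemma aux_pder_net {n d : ℕ} (a : Fin n → Fin n → (Fin n → ℝ) → ℝ) (ε : ℝ)
    (σ : ℝ → ℝ) (h1 : Differentiable ℝ σ) (h2 : Differentiable ℝ (deriv σ))
    (θ : PIdx d n → ℝ) (x : Fin n → ℝ) (μ : Fin d) :
    pder (fun θ' => LepsN a ε (fun y => netN σ d n y θ') x) θ (Sum.inr (Sum.inr (Sum.inl μ)))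
      = LepsN a ε (fun y => σ ((∑ l, θ (Sum.inl (μ, l)) * y l) + θ (Sum.inr (Sum.inl μ)))) x := by
  unfold pder
  simp_rw [aux_LepsN_net a ε σ h1 h2]
  set G : Fin d → ℝ := fun k =>
    LepsN a ε (fun y => σ ((∑ l, θ (Sum.inl (k, l)) * y l) + θ (Sum.inr (Sum.inl k)))) x with hG
  have hd : HasDerivAt (fun s => ∑ k, Function.update (fun k =>
      θ (Sum.inr (Sum.inr (Sum.inl k)))) μ s k * G k) (G μ)
      (θ (Sum.inr (Sum.inr (Sum.inl μ)))) := by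
    have h := aux_hasDerivAt_ridge (fun t => t) differentiable_id G 0
      (fun k => θ (Sum.inr (Sum.inr (Sum.inl k)))) μ
    simpa [mul_comm] using h
  have he : (fun s => ∑ k, Function.update (fun k =>
      θ (Sum.inr (Sum.inr (Sum.inl k)))) μ s k * G k) = fun s => ∑ k : Fin d,
      Function.update θ (Sum.inr (Sum.inr (Sum.inl μ))) s (Sum.inr (Sum.inr (Sum.inl k))) *
        LepsN a ε (fun y => σ ((∑ l, Function.update θ (Sum.inr (Sum.inr (Sum.inl μ))) s
          (Sum.inl (k, l)) * y l) + Function.update θ (Sum.inr (Sum.inr (Sum.inl μ))) s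
            (Sum.inr (Sum.inl k)))) x := by
    funext s
    refine Finset.sum_congr rfl fun k _ => ?_
    simp [Function.update_apply, hG]
  rw [← he]
  exact hd.deriv

lemma aux_tendsto_abs {n d : ℕ}
    (a : Fin n → Fin n → (Fin n → ℝ) → ℝ)
    (Abd : ℝ) (hAbd : 0 < Abd) (habd : ∀ i j y, |a i j y| ≤ Abd)
    (σ : ℝ → ℝ) (hσ : ContDiff ℝ 2 σ) (hσ' : ∀ y, 0 < deriv σ y)
    (x : Fin n → ℝ) (C : ℝ) (hC : 0 < C)
    (ε : ℕ → ℝ) (hεpos : ∀ m, 0 < ε m)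
    (Θ : ℕ → PIdx d n → ℝ) (hbd : ∀ m, ‖Θ m‖ ≤ C)
    (μ : Fin d)
    (h1 : Differentiable ℝ σ) (h2 : Differentiable ℝ (deriv σ))
    (hkey : Tendsto (fun m => (1 / ε m) *
        |∑ i, ∑ j, pdx (a i j) (fun k => x k / ε m) i * Θ m (Sum.inl (μ, j))|)
      atTop atTop) :
    Tendsto (fun m => |LepsN a (ε m)
          (fun y => σ ((∑ l, Θ m (Sum.inl (μ, l)) * y l) + Θ m (Sum.inr (Sum.inl μ)))) x|)
      atTop atTop := by
  have hΘ : ∀ m p, |Θ m p| ≤ C := fun m p => (norm_le_pi_norm (Θ m) p).trans (hbd m)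
  have hc1 : Continuous (deriv σ) := h2.continuous
  have hc2 : Continuous (deriv (deriv σ)) := by
    have : ContDiff ℝ 1 (deriv σ) := by
      have h := (contDiff_succ_iff_deriv (𝕜 := ℝ) (f := σ) (n := 1)).1 (by rw [one_add_one_eq_two]; exact hσ)
      exact h.2.2
    exact this.continuous_deriv le_rfl
  set R : ℝ := (∑ l, C * |x l|) + C with hR
  have hR0 : 0 ≤ R := by positivity
  have hz : ∀ m, (∑ l, Θ m (Sum.inl (μ, l)) * x l) + Θ m (Sum.inr (Sum.inl μ)) ∈ Icc (-R) R := by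
    intro m
    rw [Set.mem_Icc, ← abs_le]
    refine (abs_add_le _ _).trans (add_le_add ?_ (hΘ _ _))
    refine (Finset.abs_sum_le_sum_abs _ _).trans (Finset.sum_le_sum fun l _ => ?_)
    rw [abs_mul]
    exact mul_le_mul_of_nonneg_right (hΘ _ _) (abs_nonneg _)
  obtain ⟨z0, -, hz0⟩ := isCompact_Icc.exists_isMinOn (s := Icc (-R) R) ⟨0, by simp [hR0]⟩
    hc1.continuousOn
  obtain ⟨M, hM⟩ := isCompact_Icc.exists_bound_of_continuousOn (s := Icc (-R) R) hc2.continuousOn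
  have hc : 0 < deriv σ z0 := hσ' z0
  have hlow := tendsto_atTop_add_const_right atTop (-(∑ _i : Fin n, ∑ _j : Fin n, Abd * (M * C * C)))
    (hkey.const_mul_atTop hc)
  refine tendsto_atTop_mono (fun m => ?_) hlow
  rw [aux_LepsN_ridge a (ε m) σ h1 h2 (fun l => Θ m (Sum.inl (μ, l))) (Θ m (Sum.inr (Sum.inl μ))) x]
  have hzm := hz m
  set z := (∑ l, Θ m (Sum.inl (μ, l)) * x l) + Θ m (Sum.inr (Sum.inl μ)) with hzdef
  have hcz : deriv σ z0 ≤ deriv σ z := hz0 hzm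
  have hMz : |deriv (deriv σ) z| ≤ M := hM z hzm
  have hM0 : 0 ≤ M := (abs_nonneg _).trans hMz
  set S := ∑ i, ∑ j, pdx (a i j) (fun k => x k / ε m) i * Θ m (Sum.inl (μ, j)) with hS
  set B := ∑ i, ∑ j, a i j (fun k => x k / ε m) *
    (deriv (deriv σ) z * Θ m (Sum.inl (μ, i)) * Θ m (Sum.inl (μ, j))) with hB
  have hsplit : (∑ i, ∑ j,
      ((1 / ε m) * pdx (a i j) (fun k => x k / ε m) i * (deriv σ z * Θ m (Sum.inl (μ, j)))
        + a i j (fun k => x k / ε m) *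
          (deriv (deriv σ) z * Θ m (Sum.inl (μ, i)) * Θ m (Sum.inl (μ, j)))))
      = deriv σ z * (1 / ε m * S) + B := by
    simp_rw [hS, hB, Finset.sum_add_distrib, Finset.mul_sum]
    congr 1
    refine Finset.sum_congr rfl fun i _ => Finset.sum_congr rfl fun j _ => ?_
    ring
  rw [hsplit, abs_neg]
  have hBb : |B| ≤ ∑ _i : Fin n, ∑ _j : Fin n, Abd * (M * C * C) := by
    refine (Finset.abs_sum_le_sum_abs _ _).trans (Finset.sum_le_sum fun i _ => ?_)
    refine (Finset.abs_sum_le_sum_abs _ _).trans (Finset.sum_le_sum fun j _ => ?_)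
    rw [abs_mul, abs_mul, abs_mul]
    have := hΘ m (Sum.inl (μ, i))
    have := hΘ m (Sum.inl (μ, j))
    have := habd i j (fun k => x k / ε m)
    gcongr
  have hε : 0 < 1 / ε m := one_div_pos.2 (hεpos m)
  have h3 : |deriv σ z * (1 / ε m * S)| = deriv σ z * (1 / ε m * |S|) := by
    rw [abs_mul, abs_mul, abs_of_pos (hσ' z), abs_of_pos hε]
  have h4 : deriv σ z0 * (1 / ε m * |S|) ≤ deriv σ z * (1 / ε m * |S|) :=
    mul_le_mul_of_nonneg_right hcz (mul_nonneg hε.le (abs_nonneg _))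
  have h5 : |deriv σ z * (1 / ε m * S)| ≤ |deriv σ z * (1 / ε m * S) + B| + |B| := by
    have := abs_sub (deriv σ z * (1 / ε m * S) + B) B
    simpa using this
  linarith

/-- **Higher-dimensional sufficient condition for NTK blow-up (one hidden layer, n > 1).**
If the uniformly bounded parameters `θ^{ε_n}` are such that for some hidden unit `μ` the
quantity `(1/ε_n)|Σ_{i,j}(∂_{x_i}a_{ij})(x/ε_n) W⁰_{μj}|` diverges, then
`(L^{ε_n} g_μ(x;θ^{ε_n}))² → ∞`, so the diagonal NTK entry at the collocation point `x` and
hence the Frobenius norm of the NTK matrix tend to `+∞` along the sequence `(ε_n)`. -/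
theorem ntk_blowup_higher_dimensional
    {n d Nc Nb : ℕ} (hn : 1 < n) (hd : 0 < d) (hNc : 0 < Nc)
    (a : Fin n → Fin n → (Fin n → ℝ) → ℝ) (ha : ∀ i j, ContDiff ℝ 1 (a i j))
    (Abd : ℝ) (hAbd : 0 < Abd)
    (habd : ∀ i j y, |a i j y| ≤ Abd)
    (hadbd : ∀ i j k y, |pdx (a i j) y k| ≤ Abd)
    (σ : ℝ → ℝ) (hσ : ContDiff ℝ 2 σ) (hσ' : ∀ y, 0 < deriv σ y)
    (lam : ℝ) (xs : Fin Nc → Fin n → ℝ) (ss : Fin Nb → Fin n → ℝ) (α : Fin Nc)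
    (C : ℝ) (hC : 0 < C)
    (ε : ℕ → ℝ) (hεpos : ∀ m, 0 < ε m) (hε0 : Tendsto ε atTop (𝓝 0))
    (Θ : ℕ → PIdx d n → ℝ) (hbd : ∀ m, ‖Θ m‖ ≤ C)
    (μ : Fin d)
    (hkey : Tendsto (fun m => (1 / ε m) *
        |∑ i, ∑ j, pdx (a i j) (fun k => xs α k / ε m) i * Θ m (Sum.inl (μ, j))|)
      atTop atTop) :
    Tendsto (fun m =>
        (LepsN a (ε m)
          (fun y => σ ((∑ l, Θ m (Sum.inl (μ, l)) * y l) + Θ m (Sum.inr (Sum.inl μ))))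
          (xs α)) ^ 2) atTop atTop
    ∧ Tendsto (fun m => (1 / (Nc : ℝ)) *
        ∑ l : PIdx d n,
          (pder (fun θ' => LepsN a (ε m) (fun y => netN σ d n y θ') (xs α)) (Θ m) l) ^ 2)
      atTop atTop
    ∧ Tendsto (fun m => frob (ntkN a (ε m) (netN σ d n) lam xs ss (Θ m))) atTop atTop := by
  have h1 : Differentiable ℝ σ := hσ.differentiable (by norm_num)
  have h2 : Differentiable ℝ (deriv σ) := by
    have h := (contDiff_succ_iff_deriv (𝕜 := ℝ) (f := σ) (n := 1)).1 (by rw [one_add_one_eq_two]; exact hσ)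
    exact h.2.2.differentiable (by norm_num)
  have hA := aux_tendsto_abs a Abd hAbd habd σ hσ hσ' (xs α) C hC ε hεpos Θ hbd μ h1 h2 hkey
  have hsq : Tendsto (fun m =>
        (LepsN a (ε m)
          (fun y => σ ((∑ l, Θ m (Sum.inl (μ, l)) * y l) + Θ m (Sum.inr (Sum.inl μ))))
          (xs α)) ^ 2) atTop atTop := by
    have := (tendsto_pow_atTop (α := ℝ) (n := 2) (by norm_num)).comp hA
    refine this.congr fun m => ?_
    simp
  have hdiag : Tendsto (fun m => (1 / (Nc : ℝ)) *
        ∑ l : PIdx d n,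
          (pder (fun θ' => LepsN a (ε m) (fun y => netN σ d n y θ') (xs α)) (Θ m) l) ^ 2)
      atTop atTop := by
    have hN : (0 : ℝ) < 1 / (Nc : ℝ) := by positivity
    refine Tendsto.const_mul_atTop hN ?_
    refine tendsto_atTop_mono (fun m => ?_) hsq
    rw [← aux_pder_net a (ε m) σ h1 h2 (Θ m) (xs α) μ]
    exact Finset.single_le_sum (f := fun l : PIdx d n =>
      (pder (fun θ' => LepsN a (ε m) (fun y => netN σ d n y θ') (xs α)) (Θ m) l) ^ 2)
      (fun l _ => sq_nonneg _) (Finset.mem_univ _)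
  refine ⟨hsq, hdiag, ?_⟩
  refine tendsto_atTop_mono (fun m => ?_) hdiag
  unfold frob
  apply Real.le_sqrt_of_sq_le
  set K := ntkN a (ε m) (netN σ d n) lam xs ss (Θ m) with hK
  have hKe : (1 / (Nc : ℝ)) *
        ∑ l : PIdx d n,
          (pder (fun θ' => LepsN a (ε m) (fun y => netN σ d n y θ') (xs α)) (Θ m) l) ^ 2
      = K (Sum.inl α) (Sum.inl α) := by
    simp only [hK, ntkN, sq]
  rw [hKe]
  calc K (Sum.inl α) (Sum.inl α) ^ 2 ≤ ∑ j, K (Sum.inl α) j ^ 2 :=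
        Finset.single_le_sum (f := fun j => K (Sum.inl α) j ^ 2)
          (fun j _ => sq_nonneg _) (Finset.mem_univ _)
    _ ≤ ∑ i, ∑ j, K i j ^ 2 :=
        Finset.single_le_sum (f := fun i => ∑ j, K i j ^ 2)
          (fun i _ => Finset.sum_nonneg fun j _ => sq_nonneg _) (Finset.mem_univ _)


end
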